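/- arXiv:2007.07140 — 2 statements merged into one kernel-verified Lean document; each statement's English description precedes it below -/
import Mathlib

section
/- Let G be a finite simple graph in which every vertex has even degree, and suppose the graph polynomial F_G has a nonzero almost central coefficient. Let k ≥ 2 and H = G □ C_{2k}. Then H is degree/2-plus-one choosable: for every assignment of lists A_w ⊆ ℝ with |A_w| ≥ deg_H(w)/2 + 1 for each vertex w of H, there exists a proper coloring of H choosing each vertex's color from its list (adjacent vertices receive distinct colors). In particular ch(H) ≤ Δ(G)/2 + 2. -/
/-!
By the combinatorial Nullstellensatz it is enough that the coefficient of the graph polynomial of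
`G □ C_{2k}` at the central exponent, which is `μ = deg_G / 2 + 1` on every layer, is nonzero.
Orient the cycle and expand the factors of its edges: between two consecutive layers, the vertices
over which the tail is selected form a subset of `V`, the state of the edges there. For fixed states
the layers separate, so the coefficient is `tr (M ^ (2 * k))` for a matrix `M` indexed by states.

Selecting the other endpoint of every edge of `G` reflects exponents about `deg_G / 2` and costs the
sign `(-1) ^ |E|`, while homogeneity allows nonzero entries of `M` only between states of equal
size. Hence `Mᵀ = ± M`. An exponent `ξ` is almost central exactly if `ξ ≤ μ ≤ ξ + 2`, and then the
coefficient at `ξ` is, up to sign, an entry of `M`; so `M ≠ 0`. Finally, a nonzero real matrix with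
`Mᵀ = ± M` is not nilpotent, and `tr (M ^ (2 * k)) = ± tr ((M ^ k)ᵀ * M ^ k)` is, up to sign, a sum
of squares which are not all zero.
-/

open MvPolynomial Finset

/-- An orientation of a simple graph: a finite set of ordered pairs containing,
for each edge `{u, v}` of `G`, exactly one of `(u, v)` and `(v, u)`. -/
structure GraphOrientation {V : Type*} (G : SimpleGraph V) where
  edges : Finset (V × V)
  adj_of_mem : ∀ e ∈ edges, G.Adj e.1 e.2
  mem_iff_not_swap_mem : ∀ u v : V, G.Adj u v → ((u, v) ∈ edges ↔ (v, u) ∉ edges)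

/-- The graph polynomial `∏_{(i,j) ∈ E} (x_j - x_i)` associated to an orientation. -/
noncomputable def graphPoly {V : Type*} {G : SimpleGraph V} (D : GraphOrientation G) :
    MvPolynomial V ℝ :=
  ∏ e ∈ D.edges, (X e.2 - X e.1)

/-- The outdegree of a vertex in an orientation. -/
def GraphOrientation.outDeg {V : Type*} [DecidableEq V] {G : SimpleGraph V}
    (D : GraphOrientation G) (v : V) : ℕ :=
  (D.edges.filter fun e => e.1 = v).card

/-- `G` is `f`-choosable: any assignment of lists of real colors with `|A_v| ≥ f v`
admits a proper coloring from the lists. -/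
def Choosable {V : Type*} (G : SimpleGraph V) (f : V → ℕ) : Prop :=
  ∀ A : V → Finset ℝ, (∀ v, f v ≤ (A v).card) →
    ∃ c : V → ℝ, (∀ v, c v ∈ A v) ∧ ∀ u v : V, G.Adj u v → c u ≠ c v

/-- The list chromatic number. -/
noncomputable def chNumber {V : Type*} (G : SimpleGraph V) : ℕ :=
  sInf {m | Choosable G fun _ => m}

/-- The Alon–Tarsi number: the least `k` such that the graph polynomial has a
monomial `x^d` with nonzero coefficient and `max_v d_v = k - 1`. -/
noncomputable def ATNumber {V : Type*} (G : SimpleGraph V) : ℕ :=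
  sInf {k | ∃ (D : GraphOrientation G) (d : V →₀ ℕ),
    MvPolynomial.coeff d (graphPoly D) ≠ 0 ∧ d.support.sup d + 1 = k}

instance {α β : Type*} {G : SimpleGraph α} {H : SimpleGraph β}
    [DecidableEq α] [DecidableEq β] [DecidableRel G.Adj] [DecidableRel H.Adj] :
    DecidableRel (G.boxProd H).Adj :=
  fun _ _ => decidable_of_iff _ SimpleGraph.boxProd_adj.symm

section ClosedWalks

variable {S R : Type*} [Fintype S] [DecidableEq S] [CommSemiring R]

theorem sum_prod_walk_mul_eq_sum_pow_mul (M : Matrix S S R) (n : ℕ) (f : S → S → R) :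
    ∑ s : Fin (n + 1) → S, (∏ i : Fin n, M (s i.castSucc) (s i.succ)) * f (s 0) (s (Fin.last n)) =
      ∑ a, ∑ b, (M ^ n) a b * f a b := by
  induction n generalizing f with
  | zero =>
    rw [← (Equiv.funUnique (Fin 1) S).symm.sum_comp]
    simp [Matrix.one_apply]
  | succ n ih =>
    rw [← (Fin.consEquiv fun _ => S).sum_comp, Fintype.sum_prod_type]
    refine sum_congr rfl fun a _ => ?_
    calc
      _ = ∑ s : Fin (n + 1) → S, (∏ i : Fin n, M (s i.castSucc) (s i.succ)) *
            (M a (s 0) * f a (s (Fin.last n))) := by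
        refine sum_congr rfl fun s _ => ?_
        simp only [Fin.consEquiv, Equiv.coe_fn_mk, Fin.prod_univ_succ (n := n), Fin.castSucc_zero,
          Fin.cons_zero, Fin.cons_succ, ← Fin.succ_castSucc, ← Fin.succ_last]
        ring
      _ = ∑ c, ∑ b, (M ^ n) c b * (M a c * f a b) := ih fun c b => M a c * f a b
      _ = ∑ b, (M ^ (n + 1)) a b * f a b := by
        rw [sum_comm]
        simp only [pow_succ', Matrix.mul_apply, sum_mul]
        exact sum_congr rfl fun b _ => sum_congr rfl fun c _ => by ring

theorem trace_pow_succ_eq_sum_closed_walks (M : Matrix S S R) (n : ℕ) :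
    (M ^ (n + 1)).trace = ∑ s : Fin (n + 1) → S, ∏ i, M (s i) (s (i + 1)) := by
  simp only [Fin.prod_univ_castSucc, Fin.coeSucc_eq_succ, Fin.last_add_one]
  rw [sum_prod_walk_mul_eq_sum_pow_mul M n fun a b => M b a]
  simp only [Matrix.trace, Matrix.diag_apply, pow_succ, Matrix.mul_apply]

end ClosedWalks

section ConjTransposeEqSMul

open scoped Matrix

variable {S R : Type*} [Fintype S] [DecidableEq S] [CommRing R] [StarRing R] {M : Matrix S S R}
  {ε : R}

theorem conjTranspose_pow_mul_pow (h : Mᴴ = ε • M) (n : ℕ) :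
    (M ^ n)ᴴ * M ^ n = ε ^ n • M ^ (2 * n) := by
  rw [Matrix.conjTranspose_pow, h, smul_pow, Matrix.smul_mul, ← pow_add, two_mul]

variable [PartialOrder R] [StarOrderedRing R] [NoZeroDivisors R]

theorem pow_ne_zero_of_conjTranspose_eq_smul (h : Mᴴ = ε • M) (hM : M ≠ 0) (n : ℕ) :
    M ^ n ≠ 0 := by
  induction n with
  | zero => exact fun h₁ => hM (by rw [← mul_one M, ← pow_zero M, h₁, mul_zero])
  | succ n ih =>
    intro h₀
    rcases n.eq_zero_or_pos with rfl | hn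
    · exact hM (by simpa using h₀)
    · apply ih
      rw [← Matrix.conjTranspose_mul_self_eq_zero, conjTranspose_pow_mul_pow h,
        pow_eq_zero_of_le (by omega) h₀, smul_zero]

theorem trace_pow_two_mul_ne_zero (h : Mᴴ = ε • M) (hM : M ≠ 0) (k : ℕ) :
    (M ^ (2 * k)).trace ≠ 0 := by
  intro h₀
  apply pow_ne_zero_of_conjTranspose_eq_smul h hM k
  rw [← Matrix.trace_conjTranspose_mul_self_eq_zero_iff, conjTranspose_pow_mul_pow h,
    Matrix.trace_smul, h₀, smul_zero]

end ConjTransposeEqSMul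

section Reflection

variable {σ ι R : Type*} [CommRing R]

/-- Selecting the other variable in every factor turns an exponent `d` into
`∑ e ∈ E, (a e + b e) - d`. The monomial factors keep the subtraction out of `ℕ`. -/
theorem coeff_monomial_mul_prod_X_sub_X_reflect (E : Finset ι) (a b : ι → σ) {c c' μ μ' : σ →₀ ℕ}
    (h : c + c' + ∑ e ∈ E, (Finsupp.single (a e) 1 + Finsupp.single (b e) 1) = μ + μ') :
    coeff μ' (monomial c' (1 : R) * ∏ e ∈ E, (X (a e) - X (b e))) =
      (-1) ^ #E * coeff μ (monomial c (1 : R) * ∏ e ∈ E, (X (a e) - X (b e))) := by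
  classical
  induction E using Finset.induction_on generalizing c c' with
  | empty =>
    have hcc : c' = μ' ↔ c = μ := by
      rw [sum_empty, add_zero] at h
      constructor
      · rintro rfl; exact add_right_cancel h
      · rintro rfl; exact add_left_cancel h
    simp [coeff_monomial, hcc]
  | insert e E he ih =>
    rw [sum_insert he] at h
    have hmul (d : σ →₀ ℕ) (P : MvPolynomial σ R) :
        monomial d (1 : R) * ((X (a e) - X (b e)) * P) =
          monomial (d + Finsupp.single (a e) 1) 1 * P -
            monomial (d + Finsupp.single (b e) 1) 1 * P := by
      rw [← mul_assoc, mul_sub, sub_mul, X, X, monomial_mul, monomial_mul, mul_one]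
    rw [prod_insert he, card_insert_of_notMem he, hmul, hmul, coeff_sub, coeff_sub,
      ih (c := c + Finsupp.single (b e) 1) (c' := c' + Finsupp.single (a e) 1) (by rw [← h]; abel),
      ih (c := c + Finsupp.single (a e) 1) (c' := c' + Finsupp.single (b e) 1) (by rw [← h]; abel)]
    ring

end Reflection

section Layers

variable {V ι R : Type*} [Fintype ι]

theorem sum_mapDomain_layer_apply (e : ι → V →₀ ℕ) (v : V) (i : ι) :
    (∑ j, (e j).mapDomain fun v => (v, j)) (v, i) = e i v := by
  classical
  rw [Finsupp.finsetSum_apply, Fintype.sum_eq_single i]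
  · exact Finsupp.mapDomain_apply (Prod.mk_left_injective i) _ _
  · rintro j hj
    refine Finsupp.mapDomain_of_notMem_range _ _ ?_
    rintro ⟨x, hx⟩
    exact hj (congrArg Prod.snd hx)

theorem coeff_prod_rename_layer [CommSemiring R] (Q : ι → MvPolynomial V R) {ν : V × ι →₀ ℕ}
    {e : ι → V →₀ ℕ} (hν : ∀ v i, ν (v, i) = e i v) :
    coeff ν (∏ i, rename (fun v => (v, i)) (Q i)) = ∏ i, coeff (e i) (Q i) := by
  classical
  have hQ (i : ι) : rename (fun v => (v, i)) (Q i) =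
      ∑ m ∈ (Q i).support, monomial (m.mapDomain fun v => (v, i)) (coeff m (Q i)) := by
    conv_lhs => rw [(Q i).as_sum, map_sum]
    simp_rw [rename_monomial]
  have hp (p : ι → V →₀ ℕ) : ∑ i, (p i).mapDomain (fun v => (v, i)) = ν ↔ p = e := by
    constructor
    · rintro rfl
      ext i v
      rw [← hν, sum_mapDomain_layer_apply]
    · rintro rfl
      ext ⟨v, i⟩
      rw [hν, sum_mapDomain_layer_apply]
  simp_rw [hQ, prod_univ_sum, ← monomial_sum_prod, coeff_sum, coeff_monomial, hp, sum_ite_eq',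
    Fintype.mem_piFinset, mem_support_iff, ite_eq_left_iff, not_forall, not_not]
  rintro ⟨i, hi⟩
  exact (prod_eq_zero (mem_univ i) hi).symm

end Layers

section TransferMatrix

variable {V R : Type*} [Fintype V] [DecidableEq V]

/-- The exponent which a layer of a cyclic product receives from the edges in the cycle direction,
when exactly the edges over `S` entering the layer and the edges over `T` leaving it select their
tail. -/
noncomputable def layerExponent (S T : Finset V) : V →₀ ℕ :=
  ∑ v ∈ Sᶜ, Finsupp.single v 1 + ∑ v ∈ T, Finsupp.single v 1

theorem layerExponent_apply (S T : Finset V) (v : V) :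
    layerExponent S T v = (if v ∈ S then 0 else 1) + if v ∈ T then 1 else 0 := by
  simp [layerExponent, Finsupp.single_apply, ite_not]

theorem layerExponent_add_swap_apply (S T : Finset V) (v : V) :
    (layerExponent S T + layerExponent T S) v = 2 := by
  rw [Finsupp.add_apply, layerExponent_apply, layerExponent_apply]
  split_ifs <;> rfl

theorem degree_layerExponent_add_card (S T : Finset V) :
    (layerExponent S T).degree + #S = Fintype.card V + #T := by
  simp only [layerExponent, map_add, map_sum, Finsupp.degree_single, sum_const, smul_eq_mul,
    mul_one]
  rw [add_right_comm, card_compl_add_card]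

theorem exists_layerExponent_add_eq {ξ μ : V →₀ ℕ} (hξμ : ξ ≤ μ) (hμξ : ∀ v, μ v ≤ ξ v + 2) :
    ∃ S T, layerExponent S T + ξ = μ := by
  refine ⟨univ.filter fun v => μ v = ξ v, univ.filter fun v => μ v = ξ v + 2, ?_⟩
  ext v
  have := hξμ v
  have := hμξ v
  simp only [Finsupp.add_apply, layerExponent_apply, mem_filter, mem_univ, true_and]
  split_ifs <;> omega

variable [CommRing R]

/-- The transfer matrix of `F` at `μ`, indexed by the states of the edges between two consecutive
layers: the entry at `(S, T)` is the part of the coefficient of a cyclic product which is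
contributed by a layer carrying the exponent `μ`, once the adjacent cycle edges have selected their
endpoints. The signs of selected tails are charged to the layer which these edges leave. -/
noncomputable def transferMatrix (F : MvPolynomial V R) (μ : V →₀ ℕ) :
    Matrix (Finset V) (Finset V) R :=
  Matrix.of fun S T => (-1) ^ #T * coeff μ (monomial (layerExponent S T) 1 * F)

/-- The product of copies of `F` on the `n + 1` layers of `V × Fin (n + 1)` and of the factors of
the cycle edges, which lead from layer `i - 1` to layer `i`. -/
noncomputable def cyclicProduct (F : MvPolynomial V R) (n : ℕ) :
    MvPolynomial (V × Fin (n + 1)) R :=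
  (∏ i, rename (fun v => (v, i)) F) * ∏ i, ∏ v, (X (v, i) - X (v, i - 1))

theorem transferMatrix_ne_zero {F : MvPolynomial V R} {ξ μ : V →₀ ℕ} (hF : coeff ξ F ≠ 0)
    (hξμ : ξ ≤ μ) (hμξ : ∀ v, μ v ≤ ξ v + 2) : transferMatrix F μ ≠ 0 := by
  obtain ⟨S, T, rfl⟩ := exists_layerExponent_add_eq hξμ hμξ
  intro h
  have hST : (-1) ^ #T * coeff ξ F = 0 := by
    simpa only [transferMatrix, Matrix.of_apply, coeff_monomial_mul, one_mul, Matrix.zero_apply]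
      using congrFun₂ h S T
  exact hF ((isUnit_neg_one.pow _).mul_right_eq_zero.1 hST)

theorem rename_monomial_layerExponent {ι : Type*} (i : ι) (S T : Finset V) :
    rename (fun v => (v, i)) (monomial (layerExponent S T) (1 : R)) =
      (∏ v ∈ Sᶜ, X (v, i)) * ∏ v ∈ T, X (v, i) := by
  rw [layerExponent, ← one_mul (1 : R), ← monomial_mul, monomial_sum_one, monomial_sum_one,
    map_mul, map_prod, map_prod]
  exact congrArg₂ _ (prod_congr rfl fun v _ => rename_X _ _)
    (prod_congr rfl fun v _ => rename_X _ _)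

/-- Expanding the factors of the cycle edges into states `s i` separates the layers: layer `i` only
sees the states `s i` and `s (i + 1)`. -/
theorem cyclicProduct_eq_sum (F : MvPolynomial V R) (n : ℕ) :
    cyclicProduct F n =
      ∑ s : Fin (n + 1) → Finset V, ∏ i, rename (fun v => (v, i))
        (C ((-1) ^ #(s (i + 1))) * (monomial (layerExponent (s i) (s (i + 1))) 1 * F)) := by
  simp_rw [cyclicProduct, prod_sub, powerset_univ, ← compl_eq_univ_sdiff,
    Fintype.prod_sum, mul_sum]
  refine sum_congr rfl fun s _ => ?_
  simp only [map_mul, map_pow, map_neg, map_one, rename_monomial_layerExponent, prod_mul_distrib]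
  have hshift (f : Fin (n + 1) → MvPolynomial (V × Fin (n + 1)) R) :
      ∏ i, f (i + 1) = ∏ i, f i := Equiv.prod_comp (Equiv.addRight 1) f
  rw [← hshift fun i => ∏ v ∈ s i, X (v, i - 1), hshift fun i => (-1) ^ #(s i)]
  simp only [add_sub_cancel_right]
  ring

theorem coeff_cyclicProduct_eq_trace (F : MvPolynomial V R) (n : ℕ) {ν : V × Fin (n + 1) →₀ ℕ}
    {μ : V →₀ ℕ} (hν : ∀ v i, ν (v, i) = μ v) :
    coeff ν (cyclicProduct F n) = (transferMatrix F μ ^ (n + 1)).trace := by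
  simp only [cyclicProduct_eq_sum, coeff_sum, coeff_prod_rename_layer _ hν, coeff_C_mul,
    trace_pow_succ_eq_sum_closed_walks, transferMatrix, Matrix.of_apply]

end TransferMatrix

section Choosability

variable {V : Type*} {G : SimpleGraph V}

theorem Choosable.mono {f g : V → ℕ} (hf : Choosable G f) (hfg : f ≤ g) : Choosable G g :=
  fun A hA => hf A fun v => (hfg v).trans (hA v)

theorem chNumber_le_of_choosable {m : ℕ} (h : Choosable G fun _ => m) : chNumber G ≤ m :=
  Nat.sInf_le h

theorem graphPoly_isHomogeneous (D : GraphOrientation G) :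
    (graphPoly D).IsHomogeneous #D.edges := by
  rw [card_eq_sum_ones]
  exact IsHomogeneous.prod _ _ _ fun e _ => (isHomogeneous_X ℝ e.2).sub (isHomogeneous_X ℝ e.1)

theorem ne_of_eval_graphPoly_ne_zero {D : GraphOrientation G} {c : V → ℝ}
    (hc : eval c (graphPoly D) ≠ 0) {u v : V} (huv : G.Adj u v) : c u ≠ c v := by
  have hD : ∀ e ∈ D.edges, c e.2 ≠ c e.1 := by
    simpa [graphPoly, prod_eq_zero_iff, sub_eq_zero] using hc
  by_cases h : (u, v) ∈ D.edges
  · exact (hD _ h).symm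
  · exact hD _ ((D.mem_iff_not_swap_mem v u huv.symm).2 h)

theorem choosable_of_coeff_graphPoly_ne_zero [Finite V] {D : GraphOrientation G} {d : V →₀ ℕ}
    (hd : coeff d (graphPoly D) ≠ 0) : Choosable G fun v => d v + 1 := by
  intro A hA
  have hhom := graphPoly_isHomogeneous D
  have htot : (graphPoly D).totalDegree = d.degree := by
    rw [hhom.totalDegree (ne_zero_iff.2 ⟨d, hd⟩), not_imp_comm.1 hhom.coeff_eq_zero hd]
  obtain ⟨c, hcA, hc⟩ := combinatorial_nullstellensatz_exists_eval_nonzero _ d hd htot A hA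
  exact ⟨c, hcA, fun u v huv => ne_of_eval_graphPoly_ne_zero hc huv⟩

end Choosability

section Products

variable {V W : Type*} [Fintype V] [Fintype W] [DecidableEq V] [DecidableEq W] {G : SimpleGraph V}
  {H : SimpleGraph W}

/-- The orientation of `G □ H` which orients every copy of `G` by `D` and every copy of `H`
by `D'`. -/
def GraphOrientation.boxProd (D : GraphOrientation G) (D' : GraphOrientation H) :
    GraphOrientation (G.boxProd H) where
  edges :=
    (univ ×ˢ D.edges).image (fun p : W × V × V => ((p.2.1, p.1), (p.2.2, p.1))) ∪
      (univ ×ˢ D'.edges).image (fun p : V × W × W => ((p.1, p.2.1), (p.1, p.2.2)))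
  adj_of_mem := by
    have := D.adj_of_mem
    have := D'.adj_of_mem
    simp only [mem_union, mem_image, mem_product, SimpleGraph.boxProd_adj]
    grind
  mem_iff_not_swap_mem := by
    rintro ⟨v, w⟩ ⟨v', w'⟩ h
    rcases SimpleGraph.boxProd_adj.1 h with ⟨h, rfl : w = w'⟩ | ⟨h, rfl : v = v'⟩
    · simp [h.ne, h.ne', D.mem_iff_not_swap_mem v v' h]
    · simp [h.ne, h.ne', D'.mem_iff_not_swap_mem w w' h]

theorem graphPoly_boxProd (D : GraphOrientation G) (D' : GraphOrientation H) :
    graphPoly (D.boxProd D') = (∏ w, rename (fun v => (v, w)) (graphPoly D)) *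
      ∏ v, rename (fun w => (v, w)) (graphPoly D') := by
  have hdisj : Disjoint
      ((univ ×ˢ D.edges).image (fun p : W × V × V => ((p.2.1, p.1), (p.2.2, p.1))))
      ((univ ×ˢ D'.edges).image (fun p : V × W × W => ((p.1, p.2.1), (p.1, p.2.2)))) := by
    rw [disjoint_left]
    have := fun e he => (D.adj_of_mem e he).ne
    simp only [mem_image, mem_product]
    grind
  rw [graphPoly, GraphOrientation.boxProd, prod_union hdisj,
    prod_image (by simp +contextual [Set.InjOn]), prod_image (by simp +contextual [Set.InjOn]),
    prod_product, prod_product]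
  simp only [graphPoly, map_prod, map_sub, rename_X]

/-- The orientation of the cycle `0, 1, …, n + 2, 0` in this cyclic order. -/
def cycleOrientation (n : ℕ) : GraphOrientation (SimpleGraph.cycleGraph (n + 3)) where
  edges := univ.image fun i => (i - 1, i)
  adj_of_mem := by simp [SimpleGraph.cycleGraph_adj]
  mem_iff_not_swap_mem := by
    have one_add_one_ne_zero : (1 : Fin (n + 3)) + 1 ≠ 0 := by
      simp [Fin.ext_iff, Fin.val_add, Nat.mod_eq_of_lt (show 2 < n + 3 by omega)]
    intro u v h
    rw [SimpleGraph.cycleGraph_adj] at h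
    simp only [mem_image, mem_univ, Prod.mk.injEq, true_and, exists_eq_right]
    grind

theorem graphPoly_cycleOrientation (n : ℕ) :
    graphPoly (cycleOrientation n) = ∏ i, (X i - X (i - 1)) := by
  rw [graphPoly, cycleOrientation, prod_image (by simp +contextual [Set.InjOn])]

theorem graphPoly_boxProd_cycleOrientation (D : GraphOrientation G) (n : ℕ) :
    graphPoly (D.boxProd (cycleOrientation n)) = cyclicProduct (graphPoly D) (n + 2) := by
  rw [graphPoly_boxProd, graphPoly_cycleOrientation, cyclicProduct,
    prod_comm (s := univ (α := Fin _))]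
  simp only [map_prod, map_sub, rename_X]

end Products

section CentralCoefficient

open scoped Matrix

variable {V : Type*} [Fintype V] {G : SimpleGraph V} [DecidableRel G.Adj]

theorem sum_single_add_single_apply_eq_degree (D : GraphOrientation G) (v : V) :
    (∑ e ∈ D.edges, (Finsupp.single e.2 1 + Finsupp.single e.1 1) : V →₀ ℕ) v = G.degree v := by
  classical
  have hadj (u : V) : ((if (u, v) ∈ D.edges then 1 else 0) + if (v, u) ∈ D.edges then 1 else 0) =
      if G.Adj v u then 1 else 0 := by
    have := D.mem_iff_not_swap_mem v u
    have := D.adj_of_mem (v, u)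
    have := D.adj_of_mem (u, v)
    grind [SimpleGraph.adj_comm]
  have hin : #{e ∈ D.edges | e.2 = v} = ∑ u, if (u, v) ∈ D.edges then 1 else 0 := by
    rw [← card_filter]
    exact card_bij' (fun e _ => e.1) (fun u _ => (u, v)) (by grind) (by grind) (by grind) (by grind)
  have hout : #{e ∈ D.edges | e.1 = v} = ∑ u, if (v, u) ∈ D.edges then 1 else 0 := by
    rw [← card_filter]
    exact card_bij' (fun e _ => e.2) (fun u _ => (v, u)) (by grind) (by grind) (by grind) (by grind)
  calc
    _ = #{e ∈ D.edges | e.2 = v} + #{e ∈ D.edges | e.1 = v} := by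
      simp only [Finsupp.finsetSum_apply, Finsupp.add_apply, Finsupp.single_apply, sum_add_distrib,
        card_filter]
    _ = ∑ u, if G.Adj v u then 1 else 0 := by rw [hin, hout, ← sum_add_distrib]; simp only [hadj]
    _ = G.degree v := by
      rw [← card_filter, ← G.card_neighborFinset_eq_degree, G.neighborFinset_eq_filter]

variable [DecidableEq V]

theorem coeff_layer_graphPoly_swap (D : GraphOrientation G) {μ : V →₀ ℕ}
    (hμ : ∀ v, 2 * μ v = G.degree v + 2) (S T : Finset V) :
    coeff μ (monomial (layerExponent T S) 1 * graphPoly D) =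
      (-1) ^ #D.edges * coeff μ (monomial (layerExponent S T) 1 * graphPoly D) := by
  refine coeff_monomial_mul_prod_X_sub_X_reflect _ _ _ ?_
  ext v
  rw [Finsupp.add_apply, layerExponent_add_swap_apply, sum_single_add_single_apply_eq_degree,
    Finsupp.add_apply]
  have := hμ v
  omega

theorem card_eq_card_of_coeff_layer_ne_zero {R : Type*} [CommRing R] {F : MvPolynomial V R}
    {μ : V →₀ ℕ} {d : ℕ} (hF : F.IsHomogeneous d) {S T : Finset V}
    (hST : coeff μ (monomial (layerExponent S T) 1 * F) ≠ 0)
    (hTS : coeff μ (monomial (layerExponent T S) 1 * F) ≠ 0) : #S = #T := by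
  have hdeg {S T : Finset V} (h : coeff μ (monomial (layerExponent S T) 1 * F) ≠ 0) :
      μ.degree = (layerExponent S T).degree + d :=
    not_imp_comm.1 ((isHomogeneous_monomial 1 rfl).mul hF).coeff_eq_zero h
  have := hdeg hST
  have := hdeg hTS
  have := degree_layerExponent_add_card S T
  have := degree_layerExponent_add_card T S
  omega

theorem conjTranspose_transferMatrix_graphPoly (D : GraphOrientation G) {μ : V →₀ ℕ}
    (hμ : ∀ v, 2 * μ v = G.degree v + 2) :
    (transferMatrix (graphPoly D) μ)ᴴ = (-1 : ℝ) ^ #D.edges • transferMatrix (graphPoly D) μ := by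
  ext S T
  have hswap := coeff_layer_graphPoly_swap D hμ S T
  simp only [transferMatrix, Matrix.conjTranspose_apply, Matrix.of_apply, Matrix.smul_apply,
    star_trivial, smul_eq_mul]
  by_cases hST : coeff μ (monomial (layerExponent S T) 1 * graphPoly D) = 0
  · rw [hswap, hST]; simp
  have hTS : coeff μ (monomial (layerExponent T S) 1 * graphPoly D) ≠ 0 := by
    rw [hswap]
    exact mul_ne_zero (pow_ne_zero _ (neg_ne_zero.2 one_ne_zero)) hST
  rw [hswap, card_eq_card_of_coeff_layer_ne_zero (graphPoly_isHomogeneous D) hST hTS]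
  ring

theorem coeff_graphPoly_boxProd_cycleOrientation_ne_zero (D : GraphOrientation G) {ξ : V →₀ ℕ}
    (hξ : coeff ξ (graphPoly D) ≠ 0) (hEven : ∀ v, Even (G.degree v))
    (hac : ∀ v, |2 * (ξ v : ℤ) - G.degree v| ≤ 2) {n : ℕ} (hn : Even (n + 3)) :
    coeff (Finsupp.equivFunOnFinite.symm fun w => G.degree w.1 / 2 + 1)
      (graphPoly (D.boxProd (cycleOrientation n))) ≠ 0 := by
  set μ : V →₀ ℕ := Finsupp.equivFunOnFinite.symm fun v => G.degree v / 2 + 1 with hμ_def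
  have hμ (v : V) : 2 * μ v = G.degree v + 2 := by
    simp only [hμ_def, Finsupp.equivFunOnFinite_symm_apply_apply]
    have := (hEven v).two_dvd
    omega
  have hξμ (v : V) : ξ v ≤ μ v ∧ μ v ≤ ξ v + 2 := by
    have := hμ v
    have := abs_le.1 (hac v)
    omega
  obtain ⟨k, hk⟩ := hn.two_dvd
  rw [graphPoly_boxProd_cycleOrientation,
    coeff_cyclicProduct_eq_trace (μ := μ) _ _ fun v i => rfl, hk]
  exact trace_pow_two_mul_ne_zero (conjTranspose_transferMatrix_graphPoly D hμ)
    (transferMatrix_ne_zero hξ (fun v => (hξμ v).1) fun v => (hξμ v).2) k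

end CentralCoefficient

/-- If all degrees of `G` are even and the graph polynomial of `G`
(w.r.t. some fixed orientation) has a nonzero almost central coefficient, then for
every `k ≥ 2` the graph `H = G □ C_{2k}` is `(deg_H/2 + 1)`-choosable; in
particular `ch(H) ≤ Δ(G)/2 + 2`. -/
theorem stmt2 {V : Type*} [Fintype V] [DecidableEq V] (G : SimpleGraph V)
    [DecidableRel G.Adj]
    (hEven : ∀ v, Even (G.degree v))
    (D : GraphOrientation G) (ξ : V →₀ ℕ)
    (hne : MvPolynomial.coeff ξ (graphPoly D) ≠ 0)
    (hac : ∀ v, |2 * (ξ v : ℤ) - (G.degree v : ℤ)| ≤ 2)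
    (k : ℕ) (hk : 2 ≤ k) :
    Choosable (G.boxProd (SimpleGraph.cycleGraph (2 * k)))
        (fun w => (G.boxProd (SimpleGraph.cycleGraph (2 * k))).degree w / 2 + 1) ∧
      chNumber (G.boxProd (SimpleGraph.cycleGraph (2 * k))) ≤ G.maxDegree / 2 + 2 := by
  obtain ⟨n, hn⟩ : ∃ n, 2 * k = n + 3 := ⟨2 * k - 3, by omega⟩
  have hcoeff := coeff_graphPoly_boxProd_cycleOrientation_ne_zero D hne hEven hac
    (hn ▸ even_two_mul k)
  rw [hn]
  have hdeg (w : V × Fin (n + 3)) :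
      (G.boxProd (SimpleGraph.cycleGraph (n + 3))).degree w / 2 = G.degree w.1 / 2 + 1 := by
    rw [SimpleGraph.degree_boxProd, SimpleGraph.cycleGraph_degree_three_le,
      Nat.add_div_right _ two_pos]
  simp only [hdeg]
  have hch := choosable_of_coeff_graphPoly_ne_zero hcoeff
  refine ⟨hch, chNumber_le_of_choosable (hch.mono fun w => ?_)⟩
  exact Nat.add_le_add_right (Nat.div_le_div_right (G.degree_le_maxDegree w.1)) 2
end

section
/- For any finite simple graph G on vertex set {v_1,…,v_n} with a fixed orientation of its edges and graph polynomial F_G ∈ ℝ[x_1,…,x_n], the central coefficient of F_G² is nonzero: the coefficient of ∏_{i=1}^n x_i^{deg_G(v_i)} in F_G(x)² is nonzero. (Equivalently, it equals (−1)^{|E(G)|} times the sum of squares of all coefficients of F_G, which is nonzero since F_G is a nonzero polynomial.) -/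
/-!
Call `p` self-reciprocal with respect to an exponent `d` and a sign `ε` if `x^d p(x⁻¹) = ε p(x)`.
Every factor `x_j - x_i` is self-reciprocal with respect to `x_i x_j` and the sign `-1`, and
self-reciprocity is multiplicative, so `F_G` is self-reciprocal with respect to its degree sequence
and the sign `(-1)^|E|`. For a self-reciprocal `p`, the coefficients paired up in `coeff d (p ^ 2)`
agree up to `ε`, so this coefficient is `ε` times the sum of the squares of the coefficients of `p`.
-/

open MvPolynomial Finset

theorem tsub_mem_antidiagonal {M : Type*} [AddCommMonoid M] [IsLeftCancelAdd M] [PartialOrder M]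
    [CanonicallyOrderedAdd M] [Sub M] [OrderedSub M] [HasAntidiagonal M] {a b : M} {u x : M × M}
    (hab : a + b = u.1 + u.2) (hxu : x ≤ u) (hx : x ∈ HasAntidiagonal.antidiagonal a) :
    u - x ∈ HasAntidiagonal.antidiagonal b := by
  rw [HasAntidiagonal.mem_antidiagonal] at hx ⊢
  refine add_left_cancel (a := a) ?_
  calc a + ((u - x).1 + (u - x).2) = (x.1 + (u.1 - x.1)) + (x.2 + (u.2 - x.2)) := by
        rw [← hx, add_add_add_comm, Prod.fst_sub, Prod.snd_sub]
    _ = a + b := by rw [add_tsub_cancel_of_le hxu.1, add_tsub_cancel_of_le hxu.2, hab]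

section SelfReciprocal

variable {σ ι R : Type*}

/-- A polynomial `p` is self-reciprocal with respect to the exponent `d` and the factor `ε` if
`x^d p(x⁻¹) = ε p(x)`. This is the symmetry that turns the coefficient of `x^d` in `p²` into a sum
of squares. Stated on coefficients, where exponents `a` and `b` with `a + b = d` correspond to each
other, it needs no inverses of the variables. -/
structure IsSelfReciprocal [CommSemiring R] (p : MvPolynomial σ R) (d : σ →₀ ℕ) (ε : R) :
    Prop where
  le_of_coeff_ne_zero : ∀ a, coeff a p ≠ 0 → a ≤ d
  coeff_eq : ∀ a b, a + b = d → coeff a p = ε * coeff b p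

namespace IsSelfReciprocal

section CommSemiring

variable [CommSemiring R] {p q : MvPolynomial σ R} {d d' : σ →₀ ℕ} {ε ε' : R}

theorem one : IsSelfReciprocal (1 : MvPolynomial σ R) 0 1 where
  le_of_coeff_ne_zero a ha := by
    classical
    rw [coeff_one] at ha
    exact (of_not_not fun h => ha (if_neg h) : 0 = a).ge
  coeff_eq a b hab := by
    obtain ⟨rfl, rfl⟩ := add_eq_zero.1 hab
    rw [one_mul]

theorem le_of_coeff_mul_coeff_ne_zero (hp : IsSelfReciprocal p d ε) (hq : IsSelfReciprocal q d' ε')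
    {x : (σ →₀ ℕ) × (σ →₀ ℕ)} (hx : coeff x.1 p * coeff x.2 q ≠ 0) : x ≤ (d, d') :=
  ⟨hp.le_of_coeff_ne_zero _ (left_ne_zero_of_mul hx),
    hq.le_of_coeff_ne_zero _ (right_ne_zero_of_mul hx)⟩

theorem coeff_mul_coeff_eq (hp : IsSelfReciprocal p d ε) (hq : IsSelfReciprocal q d' ε')
    {x y : (σ →₀ ℕ) × (σ →₀ ℕ)} (hxy : x + y = (d, d')) :
    coeff x.1 p * coeff x.2 q = ε * ε' * (coeff y.1 p * coeff y.2 q) := by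
  rw [hp.coeff_eq x.1 y.1 (Prod.ext_iff.1 hxy).1, hq.coeff_eq x.2 y.2 (Prod.ext_iff.1 hxy).2,
    mul_mul_mul_comm]

theorem mul (hp : IsSelfReciprocal p d ε) (hq : IsSelfReciprocal q d' ε') :
    IsSelfReciprocal (p * q) (d + d') (ε * ε') where
  le_of_coeff_ne_zero a ha := by
    classical
    rw [coeff_mul] at ha
    obtain ⟨x, hx, hne⟩ := Finset.exists_ne_zero_of_sum_ne_zero ha
    obtain ⟨hle, hle'⟩ := hp.le_of_coeff_mul_coeff_ne_zero hq hne
    exact HasAntidiagonal.mem_antidiagonal.1 hx ▸ add_le_add hle hle'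
  coeff_eq a b hab := by
    classical
    have hle {x : (σ →₀ ℕ) × (σ →₀ ℕ)} (hx : coeff x.1 p * coeff x.2 q ≠ 0) : x ≤ (d, d') :=
      hp.le_of_coeff_mul_coeff_ne_zero hq hx
    rw [coeff_mul, coeff_mul, Finset.mul_sum]
    refine Finset.sum_bij_ne_zero (fun x _ _ => (d, d') - x)
      (fun x hx hne => tsub_mem_antidiagonal hab (hle hne) hx)
      (fun x _ hx y _ hy => (tsub_right_inj (hle hx) (hle hy)).1) (fun y hy hne => ?_)
      (fun x _ hne => hp.coeff_mul_coeff_eq hq (add_tsub_cancel_of_le (hle hne)))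
    have hyle := hle (right_ne_zero_of_mul hne)
    refine ⟨(d, d') - y, tsub_mem_antidiagonal ((add_comm b a).trans hab) hyle hy, ?_,
      tsub_tsub_cancel_of_le hyle⟩
    rwa [hp.coeff_mul_coeff_eq hq (tsub_add_cancel_of_le hyle)]

theorem prod {s : Finset ι} {f : ι → MvPolynomial σ R} {d : ι → σ →₀ ℕ} {ε : ι → R}
    (h : ∀ i ∈ s, IsSelfReciprocal (f i) (d i) (ε i)) :
    IsSelfReciprocal (∏ i ∈ s, f i) (∑ i ∈ s, d i) (∏ i ∈ s, ε i) := by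
  classical
  induction s using Finset.induction_on with
  | empty => exact one
  | insert i s hi ih =>
    rw [prod_insert hi, sum_insert hi, prod_insert hi]
    exact (h i (mem_insert_self i s)).mul (ih fun j hj => h j (mem_insert_of_mem hj))

theorem coeff_sq (hp : IsSelfReciprocal p d ε) :
    coeff d (p ^ 2) = ε * ∑ a ∈ p.support, coeff a p ^ 2 := by
  classical
  rw [sq, coeff_mul, Finset.mul_sum]
  refine (Finset.sum_of_injOn (fun a => (d - a, a)) (fun a _ b _ h => (Prod.ext_iff.1 h).2)
    (fun a ha => ?_) (fun x hx hxs => ?_) (fun a ha => ?_)).symm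
  · exact HasAntidiagonal.mem_antidiagonal.2
      (tsub_add_cancel_of_le (hp.le_of_coeff_ne_zero a (mem_support_iff.1 ha)))
  · have hsub : d - x.2 = x.1 := tsub_eq_of_eq_add (HasAntidiagonal.mem_antidiagonal.1 hx).symm
    have hcoeff : coeff x.2 p = 0 :=
      notMem_support_iff.1 fun hmem => hxs ⟨x.2, hmem, Prod.ext hsub rfl⟩
    rw [hcoeff, mul_zero]
  · rw [hp.coeff_eq (d - a) a
      (tsub_add_cancel_of_le (hp.le_of_coeff_ne_zero a (mem_support_iff.1 ha))), mul_assoc, sq]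

end CommSemiring

theorem X_sub_X [CommRing R] (i j : σ) :
    IsSelfReciprocal (X j - X i : MvPolynomial σ R)
      (Finsupp.single i 1 + Finsupp.single j 1) (-1) where
  le_of_coeff_ne_zero a ha := by
    classical
    rw [coeff_sub, coeff_X, coeff_X] at ha
    by_cases hj : Finsupp.single j 1 = a
    · exact hj ▸ le_add_self
    · by_cases hi : Finsupp.single i 1 = a
      · exact hi ▸ le_self_add
      · simp [hi, hj] at ha
  coeff_eq a b hab := by
    classical
    have hi : Finsupp.single i 1 = a ↔ Finsupp.single j 1 = b :=
      ⟨fun h => (add_left_cancel (h ▸ hab)).symm, fun h => (add_right_cancel (h ▸ hab)).symm⟩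
    have hj : Finsupp.single j 1 = a ↔ Finsupp.single i 1 = b := by
      rw [add_comm (Finsupp.single i 1)] at hab
      exact ⟨fun h => (add_left_cancel (h ▸ hab)).symm, fun h => (add_right_cancel (h ▸ hab)).symm⟩
    simp only [coeff_sub, coeff_X, hi, hj]
    ring

theorem coeff_sq_ne_zero [CommRing R] [LinearOrder R] [IsStrictOrderedRing R]
    {p : MvPolynomial σ R} {d : σ →₀ ℕ} {ε : R} (hp : IsSelfReciprocal p d ε) (hε : ε ≠ 0)
    (hp0 : p ≠ 0) : coeff d (p ^ 2) ≠ 0 := by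
  rw [hp.coeff_sq]
  have hsum : 0 < ∑ a ∈ p.support, coeff a p ^ 2 :=
    sum_pos (fun a ha => sq_pos_of_ne_zero (mem_support_iff.1 ha)) (support_nonempty.2 hp0)
  exact mul_ne_zero hε hsum.ne'

end IsSelfReciprocal

end SelfReciprocal

namespace GraphOrientation

variable {V : Type*} {G : SimpleGraph V}

/-- The indegree of a vertex in an orientation, the counterpart of `GraphOrientation.outDeg`. -/
def inDeg [DecidableEq V] (D : GraphOrientation G) (v : V) : ℕ :=
  (D.edges.filter fun e => e.2 = v).card

section Degree

variable [DecidableEq V] [G.LocallyFinite] (D : GraphOrientation G) (v : V)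

theorem outDeg_eq_card_filter_neighborFinset :
    D.outDeg v = #{w ∈ G.neighborFinset v | (v, w) ∈ D.edges} := by
  refine card_nbij' Prod.snd (fun w => (v, w)) ?_ ?_ ?_ ?_
  · rintro ⟨u, w⟩ h
    obtain ⟨he, rfl⟩ := mem_filter.1 h
    exact mem_filter.2 ⟨(G.mem_neighborFinset _ _).2 (D.adj_of_mem _ he), he⟩
  · exact fun w h => mem_filter.2 ⟨(mem_filter.1 h).2, rfl⟩
  · rintro ⟨u, w⟩ h
    exact Prod.ext (mem_filter.1 h).2.symm rfl
  · exact fun w _ => rfl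

theorem inDeg_eq_card_filter_neighborFinset :
    D.inDeg v = #{w ∈ G.neighborFinset v | (v, w) ∉ D.edges} := by
  refine card_nbij' Prod.fst (fun w => (w, v)) ?_ ?_ ?_ ?_
  · rintro ⟨w, u⟩ h
    obtain ⟨he, rfl⟩ := mem_filter.1 h
    have hadj := D.adj_of_mem _ he
    exact mem_filter.2
      ⟨(G.mem_neighborFinset _ _).2 hadj.symm, (D.mem_iff_not_swap_mem _ _ hadj).1 he⟩
  · intro w h
    obtain ⟨hw, he⟩ := mem_filter.1 h
    have hadj := (G.mem_neighborFinset _ _).1 hw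
    exact mem_filter.2 ⟨(D.mem_iff_not_swap_mem _ _ hadj.symm).2 he, rfl⟩
  · rintro ⟨w, u⟩ h
    exact Prod.ext rfl (mem_filter.1 h).2.symm
  · exact fun w _ => rfl

theorem outDeg_add_inDeg : D.outDeg v + D.inDeg v = G.degree v := by
  rw [outDeg_eq_card_filter_neighborFinset, inDeg_eq_card_filter_neighborFinset,
    card_filter_add_card_filter_not, G.card_neighborFinset_eq_degree]

end Degree

theorem sum_single_add_single_apply [DecidableEq V] (D : GraphOrientation G) (v : V) :
    (∑ e ∈ D.edges, (Finsupp.single e.1 1 + Finsupp.single e.2 1) : V →₀ ℕ) v =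
      D.outDeg v + D.inDeg v := by
  simp only [Finsupp.finsetSum_apply, Finsupp.add_apply, Finsupp.single_apply, sum_add_distrib,
    sum_boole, Nat.cast_id, outDeg, inDeg]

theorem isSelfReciprocal_prod_X_sub_X (R : Type*) [CommRing R] (D : GraphOrientation G) :
    IsSelfReciprocal (∏ e ∈ D.edges, (X e.2 - X e.1) : MvPolynomial V R)
      (∑ e ∈ D.edges, (Finsupp.single e.1 1 + Finsupp.single e.2 1)) ((-1) ^ #D.edges) := by
  rw [← prod_const]
  exact .prod fun e _ => .X_sub_X e.1 e.2

theorem prod_X_sub_X_ne_zero (R : Type*) [CommRing R] [IsDomain R] (D : GraphOrientation G) :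
    (∏ e ∈ D.edges, (X e.2 - X e.1) : MvPolynomial V R) ≠ 0 :=
  prod_ne_zero_iff.2 fun e he => sub_ne_zero.2 (X_injective.ne (D.adj_of_mem e he).ne')

end GraphOrientation

theorem stmt5_general {V R : Type*} [CommRing R] [LinearOrder R] [IsStrictOrderedRing R]
    {G : SimpleGraph V} [G.LocallyFinite] (D : GraphOrientation G) (d : V →₀ ℕ)
    (hd : ∀ v, d v = G.degree v) :
    coeff d ((∏ e ∈ D.edges, (X e.2 - X e.1) : MvPolynomial V R) ^ 2) ≠ 0 := by
  classical
  have hdeg : ∑ e ∈ D.edges, (Finsupp.single e.1 1 + Finsupp.single e.2 1) = d := by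
    ext v
    rw [D.sum_single_add_single_apply, D.outDeg_add_inDeg, hd]
  rw [← hdeg]
  exact (D.isSelfReciprocal_prod_X_sub_X R).coeff_sq_ne_zero
    (pow_ne_zero _ (neg_ne_zero.2 one_ne_zero)) (D.prod_X_sub_X_ne_zero R)

/-- For any finite simple graph `G` with a fixed orientation of its
edges, the central coefficient of `F_G²` — the coefficient of
`∏_v x_v^{deg_G(v)}` — is nonzero. -/
theorem stmt5 {V : Type*} [Fintype V] [DecidableEq V] (G : SimpleGraph V)
    [DecidableRel G.Adj] (D : GraphOrientation G) :
    MvPolynomial.coeff (Finsupp.equivFunOnFinite.symm fun v => G.degree v)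
      (graphPoly D ^ 2) ≠ 0 :=
  stmt5_general D _ fun _ => rfl
end
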